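/- The two-element subgroup {1, -1} of H (consisting of the identity matrix and its negative) is a normal subgroup of H, and the quotient of H by this subgroup is isomorphic to the dihedral group of order 8. -/

import Mathlib

open Matrix Complex
open scoped MatrixGroups

noncomputable section

def jM : Matrix (Fin 2) (Fin 2) ℂ := !![0, Complex.I; Complex.I, 0]
def dM : Matrix (Fin 2) (Fin 2) ℂ :=
  ((Real.sqrt 2 : ℂ))⁻¹ • !![-1, 1; 1, 1]

def H : Subgroup (GL (Fin 2) ℂ) :=
  Subgroup.closure {g : GL (Fin 2) ℂ |
    (g : Matrix (Fin 2) (Fin 2) ℂ) = jM ∨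
    (g : Matrix (Fin 2) (Fin 2) ℂ) = dM}

/-- The proposition that the quotient of `Γ` by the normal subgroup `K`
is isomorphic to `Δ` as a group. -/
def QuotIsoTo {Γ : Type} [Group Γ] (K : Subgroup Γ) (hK : K.Normal)
    (Δ : Type) [Group Δ] : Prop := by
  letI := hK
  exact Nonempty ((Γ ⧸ K) ≃* Δ)

open DihedralGroup in
/-- A group generated by two involutions `a`, `b` with `(a b)^4 = 1` and `(a b)^2 ≠ 1`
is the dihedral group of order eight. -/
theorem dihedral_of_involutions {G : Type} [Group G] (a b : G) (ha : a * a = 1) (hb : b * b = 1)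
    (h4 : (a * b) ^ 4 = 1) (h2 : (a * b) ^ 2 ≠ 1)
    (hgen : ∀ S : Subgroup G, a ∈ S → b ∈ S → S = ⊤) :
    Nonempty (G ≃* DihedralGroup 4) := by
  have hai : a⁻¹ = a := inv_eq_of_mul_eq_one_left ha
  have hbi : b⁻¹ = b := inv_eq_of_mul_eq_one_left hb
  obtain ⟨φ, hφ⟩ : ∃ φ : ZMod 4 → G, ∀ i, φ i = (a * b) ^ i.val := ⟨_, fun _ => rfl⟩
  have hadd : ∀ i j, φ (i + j) = φ i * φ j := by
    intro i j
    rw [hφ, hφ, hφ, ZMod.val_add, ← pow_add, ← pow_eq_pow_mod _ h4]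
  have h0 : φ 0 = 1 := by simp [hφ]
  have h1 : φ 1 = a * b := by
    rw [hφ, show (1 : ZMod 4).val = 1 from rfl, pow_one]
  have hneg : ∀ i, φ (-i) = (φ i)⁻¹ := by
    intro i
    rw [eq_inv_iff_mul_eq_one, ← hadd, neg_add_cancel, h0]
  have hsub : ∀ i j, φ (i - j) = φ i * (φ j)⁻¹ := by
    intro i j
    rw [sub_eq_add_neg, hadd, hneg]
  have hcomm : ∀ i j, φ i * φ j = φ j * φ i := by
    intro i j
    rw [← hadd, ← hadd, add_comm]
  have hconj : ∀ i, b * φ i * b = (φ i)⁻¹ := by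
    intro i
    have e1 : b * φ i * b⁻¹ = (b * (a * b) * b⁻¹) ^ i.val := by rw [conj_pow, hφ]
    have e2 : b * (a * b) * b⁻¹ = (a * b)⁻¹ := by
      rw [_root_.mul_inv_rev, hai, hbi, mul_assoc, mul_assoc, hb, mul_one]
    rw [e2, inv_pow, ← hφ, hbi] at e1
    exact e1
  have hswap : ∀ i, φ i * b = b * (φ i)⁻¹ := by
    intro i
    rw [← hconj i, ← mul_assoc, ← mul_assoc, hb, one_mul]
  have hic : ∀ i j, (φ i)⁻¹ * φ j = φ j * (φ i)⁻¹ := by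
    intro i j
    rw [← hneg, hcomm]
  let f : DihedralGroup 4 →* G := MonoidHom.mk'
    (fun x => match x with
      | r i => φ i
      | sr i => b * φ i) (by
        rintro (i | i) (j | j)
        · exact hadd i j
        · change b * φ (j - i) = φ i * (b * φ j)
          rw [hsub, ← mul_assoc (φ i), hswap, mul_assoc, hic]
        · change b * φ (i + j) = b * φ i * φ j
          rw [hadd, mul_assoc]
        · change φ (j - i) = b * φ i * (b * φ j)
          rw [← mul_assoc, hconj, hsub, hic])
  have fr : ∀ i, f (r i) = φ i := fun _ => rfl
  have fs : ∀ i, f (sr i) = b * φ i := fun _ => rfl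
  have hr2 : f (r 2) ≠ 1 := by
    rw [fr, hφ]
    exact h2
  have hinj : Function.Injective f := by
    rw [injective_iff_map_eq_one]
    rintro (i | i) hx
    · have hx2 : f (r i * r i) = 1 := by rw [map_mul, hx, one_mul]
      fin_cases i
      · rfl
      · exact absurd hx2 hr2
      · exact absurd hx hr2
      · exact absurd hx2 hr2
    · exfalso
      have key : ∀ k : ZMod 4, (r 2 : DihedralGroup 4) = sr k * r 1 * sr k * (r 1)⁻¹ := by
        decide
      apply hr2
      rw [key i]
      simp only [map_mul, map_inv, hx, one_mul, mul_one, mul_inv_cancel]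
  have hsurj : Function.Surjective f := by
    rw [← MonoidHom.range_eq_top]
    have hbm : b ∈ f.range := ⟨sr 0, by rw [fs, h0, mul_one]⟩
    refine hgen _ ?_ hbm
    have : a * b ∈ f.range := ⟨r 1, by rw [fr, h1]⟩
    have h := f.range.mul_mem this hbm
    rwa [mul_assoc, hb, mul_one] at h
  exact ⟨(MulEquiv.ofBijective f ⟨hinj, hsurj⟩).symm⟩

theorem jM_sq : jM * jM = -1 := by
  ext i j
  fin_cases i <;> fin_cases j <;> simp [jM, Matrix.mul_apply, Fin.sum_univ_two]

theorem sqrt_two_inv_sq : ((Real.sqrt 2 : ℂ))⁻¹ * ((Real.sqrt 2 : ℂ))⁻¹ = 1 / 2 := by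
  rw [← mul_inv, ← Complex.ofReal_mul, Real.mul_self_sqrt (by norm_num)]
  norm_num

theorem dM_sq : dM * dM = 1 := by
  rw [dM, Matrix.smul_mul, Matrix.mul_smul, smul_smul, sqrt_two_inv_sq]
  ext i j
  fin_cases i <;> fin_cases j <;> simp [Matrix.mul_apply, Fin.sum_univ_two] <;> norm_num

theorem jd_sq : (jM * dM) * (jM * dM) = !![0, -1; 1, 0] := by
  rw [dM, Matrix.mul_smul, Matrix.smul_mul, Matrix.mul_smul, smul_smul, sqrt_two_inv_sq, jM]
  ext i j
  fin_cases i <;> fin_cases j <;> simp [Matrix.mul_apply, Fin.sum_univ_two] <;>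
    ring_nf <;> simp

theorem jd_four : (jM * dM) * (jM * dM) * ((jM * dM) * (jM * dM)) = -1 := by
  rw [jd_sq]
  ext i j
  fin_cases i <;> fin_cases j <;> simp [Matrix.mul_apply, Fin.sum_univ_two]

/-- The matrix `j` as an invertible matrix. -/
def jG : GL (Fin 2) ℂ :=
  ⟨jM, -jM, by rw [mul_neg, jM_sq, neg_neg], by rw [neg_mul, jM_sq, neg_neg]⟩

/-- The matrix `d` as an invertible matrix. -/
def dG : GL (Fin 2) ℂ := ⟨dM, dM, dM_sq, dM_sq⟩

/-- The generator `j` of `H`. -/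
def jH : H := ⟨jG, Subgroup.subset_closure (Or.inl rfl)⟩

/-- The generator `d` of `H`. -/
def dH : H := ⟨dG, Subgroup.subset_closure (Or.inr rfl)⟩

/-- The subgroup of signs. -/
def signK : Subgroup H where
  carrier := {g | ((g : GL (Fin 2) ℂ) : Matrix (Fin 2) (Fin 2) ℂ) = 1 ∨
        ((g : GL (Fin 2) ℂ) : Matrix (Fin 2) (Fin 2) ℂ) = -1}
  one_mem' := Or.inl rfl
  mul_mem' := by
    intro x y hx hy
    change ((x : GL (Fin 2) ℂ) : Matrix (Fin 2) (Fin 2) ℂ) * ((y : GL (Fin 2) ℂ) : Matrix _ _ ℂ) = 1 ∨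
      ((x : GL (Fin 2) ℂ) : Matrix (Fin 2) (Fin 2) ℂ) * ((y : GL (Fin 2) ℂ) : Matrix _ _ ℂ) = -1
    rcases hx with hx | hx <;> rcases hy with hy | hy <;> rw [hx, hy] <;> simp
  inv_mem' := by
    rintro x (hx | hx)
    · left
      have : (x : GL (Fin 2) ℂ) = 1 := Units.ext hx
      simp [this]
    · right
      have : (x : GL (Fin 2) ℂ) = -1 := Units.ext hx
      simp [this]

theorem mem_signK (g : H) : g ∈ signK ↔
    ((g : GL (Fin 2) ℂ) : Matrix (Fin 2) (Fin 2) ℂ) = 1 ∨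
    ((g : GL (Fin 2) ℂ) : Matrix (Fin 2) (Fin 2) ℂ) = -1 := Iff.rfl

theorem signK_normal : signK.Normal := by
  refine ⟨fun x hx g => ?_⟩
  have hc : g * x = x * g := by
    apply Subtype.ext
    apply Units.ext
    rcases hx with hx | hx <;> simp [hx]
  rw [hc, mul_assoc, mul_inv_cancel, mul_one]
  exact hx

theorem quotient_of_H_by_signs_is_dihedral :
    ∃ K : Subgroup H,
      (∀ g : H, g ∈ K ↔
        ((g : GL (Fin 2) ℂ) : Matrix (Fin 2) (Fin 2) ℂ) = 1 ∨
        ((g : GL (Fin 2) ℂ) : Matrix (Fin 2) (Fin 2) ℂ) = -1) ∧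
      ∃ hK : K.Normal, QuotIsoTo K hK (DihedralGroup 4) := by
  refine ⟨signK, mem_signK, signK_normal, ?_⟩
  have := signK_normal
  change Nonempty ((H ⧸ signK) ≃* DihedralGroup 4)
  refine dihedral_of_involutions (jH : H ⧸ signK) (dH : H ⧸ signK) ?_ ?_ ?_ ?_ ?_
  · rw [← QuotientGroup.mk_mul, QuotientGroup.eq_one_iff]
    exact Or.inr jM_sq
  · rw [← QuotientGroup.mk_mul, QuotientGroup.eq_one_iff]
    exact Or.inl dM_sq
  · rw [← QuotientGroup.mk_mul, ← QuotientGroup.mk_pow, QuotientGroup.eq_one_iff,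
      show (jH * dH) ^ 4 = (jH * dH) * (jH * dH) * ((jH * dH) * (jH * dH)) by
        rw [← pow_two, ← pow_two, ← pow_mul]]
    exact Or.inr jd_four
  · rw [← QuotientGroup.mk_mul, ← QuotientGroup.mk_pow, Ne, QuotientGroup.eq_one_iff, pow_two]
    have e : (((jH * dH * (jH * dH) : H) : GL (Fin 2) ℂ) : Matrix (Fin 2) (Fin 2) ℂ)
        = !![0, -1; 1, 0] := jd_sq
    rw [mem_signK, e]
    rintro (h | h)
    · simpa using congrFun (congrFun h 0) 0
    · simpa using congrFun (congrFun h 0) 0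
  · intro S hj hd
    have key : ∀ (x : GL (Fin 2) ℂ) (hx : x ∈ H), ((⟨x, hx⟩ : H) : H ⧸ signK) ∈ S := by
      intro x hx
      induction hx using Subgroup.closure_induction with
      | mem x hx =>
        rcases hx with hx | hx
        · have : x = jG := Units.ext hx
          subst this
          exact hj
        · have : x = dG := Units.ext hx
          subst this
          exact hd
      | one => exact S.one_mem
      | mul x y hx hy ihx ihy => exact S.mul_mem ihx ihy
      | inv x hx ih => exact S.inv_mem ih
    rw [eq_top_iff]
    rintro q -
    induction q using QuotientGroup.induction_on with
    | H z => exact key z.1 z.2
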